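/- arXiv:1911.10731 — 2 statements merged into one kernel-verified Lean document; each statement's English description precedes it below -/
import Mathlib

section
/- Let f be a cellular automaton on A^ℤ. If the generic limit set ω̃(f) is a minimal subshift (it has no nonempty proper closed σ-invariant subset), then its language L(ω̃(f)) is a Σ⁰₂ set of words. -/
open Filter Set Function

namespace Gls

variable {A : Type*}

/-- The left shift map on `A^ℤ`. -/
def shift (x : ℤ → A) : ℤ → A := fun i => x (i + 1)

/-- A cellular automaton: a continuous shift-commuting self-map of the full shift. -/
def IsCA [TopologicalSpace A] (f : (ℤ → A) → (ℤ → A)) : Prop :=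
  Continuous f ∧ f ∘ shift = shift ∘ f

/-- The set of limit points of the forward orbit of `x` under `f`. -/
def omegaSet [TopologicalSpace A] (f : (ℤ → A) → (ℤ → A)) (x : ℤ → A) : Set (ℤ → A) :=
  {y | MapClusterPt y atTop fun t => f^[t] x}

/-- The realm of attraction of `Y`. -/
def realm [TopologicalSpace A] (f : (ℤ → A) → (ℤ → A)) (Y : Set (ℤ → A)) : Set (ℤ → A) :=
  {x | omegaSet f x ⊆ Y}

/-- The generic limit set: the intersection of all closed sets whose realm is comeager. -/
def genLimitSet [TopologicalSpace A] (f : (ℤ → A) → (ℤ → A)) : Set (ℤ → A) :=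
  ⋂₀ {C | IsClosed C ∧ realm f C ∈ residual (ℤ → A)}

/-- The word `x_{[i, i+n)}` of length `n` read in the configuration `x` from position `i`. -/
def word (x : ℤ → A) (i : ℤ) (n : ℕ) : List A :=
  (List.range n).map fun k => x (i + k)

/-- The cylinder set `[w]_i`. -/
def cylinder (w : List A) (i : ℤ) : Set (ℤ → A) := {x | word x i w.length = w}

/-- The language of `X`: all finite words occurring in points of `X`. -/
def lang (X : Set (ℤ → A)) : Set (List A) :=
  {w | ∃ x ∈ X, ∃ i : ℤ, word x i w.length = w}


/-- The arithmetical hierarchy over `ℕ`: `NatSigma 0` is the class of computable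
predicates, and a predicate is `NatSigma (n+1)` (i.e. `Σ⁰ₙ₊₁`) if it is of the form
`{a | ∃ k, (a, k) ∈ R}` for a `Π⁰ₙ` relation `R` (i.e. a relation whose complement is `Σ⁰ₙ`). -/
def NatSigma : ℕ → (ℕ → Prop) → Prop
  | 0 => fun P => ComputablePred P
  | (n + 1) => fun P =>
      ∃ R : ℕ → Prop, NatSigma n (fun a => ¬ R a) ∧ ∀ a, P a ↔ ∃ k, R (Nat.pair a k)

/-- A set of words is `Σ⁰ₙ` if, identifying words with natural numbers via the canonical
computable encoding, it is a `Σ⁰ₙ` subset of `ℕ`. -/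
def SigmaLang {A : Type*} [Primcodable A] (n : ℕ) (P : Set (List A)) : Prop :=
  NatSigma n (fun m => ∃ w : List A, Encodable.encode w = m ∧ w ∈ P)

/-- A set of words is `Π⁰ₙ` if its complement is `Σ⁰ₙ`. -/
def PiLang {A : Type*} [Primcodable A] (n : ℕ) (P : Set (List A)) : Prop :=
  SigmaLang n {w | w ∉ P}

/-! ### Computability part -/

theorem natSigma_two_of_primrec {β γ δ : Type*} [Primcodable β] [Primcodable γ] [Primcodable δ]
    (Q : (β × γ) → δ → Prop) (hQ : PrimrecRel Q) (S : β → Prop)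
    (hS : ∀ b, S b ↔ ∃ c, ∀ d, Q (b, c) d) :
    NatSigma 2 (fun m => ∃ b : β, Encodable.encode b = m ∧ S b) := by
  classical
  obtain ⟨_, hq⟩ := hQ
  let G : ℕ → ℕ → ℕ → Bool := fun m k l =>
    Option.casesOn (Encodable.decode (α := β × γ) k) false (fun bc =>
      Option.casesOn (Encodable.decode (α := δ) l) (decide (Encodable.encode bc.1 = m))
        (fun d => decide (Encodable.encode bc.1 = m) && decide (Q bc d)))
  let D : ℕ → Bool := fun n => G n.unpair.1.unpair.1 n.unpair.1.unpair.2 n.unpair.2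
  have hD : Primrec D := by
    have h1 : Primrec fun n : ℕ => n.unpair.1.unpair.1 :=
      (Primrec.fst.comp Primrec.unpair).comp (Primrec.fst.comp Primrec.unpair)
    have h2 : Primrec fun n : ℕ => n.unpair.1.unpair.2 :=
      (Primrec.snd.comp Primrec.unpair).comp (Primrec.fst.comp Primrec.unpair)
    have h3 : Primrec fun n : ℕ => n.unpair.2 := Primrec.snd.comp Primrec.unpair
    have hE : Primrec fun z : ℕ × (β × γ) =>
        decide (Encodable.encode z.2.1 = z.1.unpair.1.unpair.1) := by
      have := (Primrec.eq (α := ℕ)).decide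
      exact this.comp (Primrec.encode.comp (Primrec.fst.comp Primrec.snd)) (h1.comp Primrec.fst)
    refine Primrec.option_casesOn (Primrec.decode.comp h2) (Primrec.const false) ?_
    refine Primrec.option_casesOn (Primrec.decode.comp (h3.comp Primrec.fst)) hE ?_
    refine Primrec.and.comp (hE.comp Primrec.fst) ?_
    exact hq.comp (Primrec.pair (α := (ℕ × (β × γ)) × δ) (Primrec.snd.comp Primrec.fst) Primrec.snd) |>.of_eq
      fun z => by simp only [decide_eq_decide]
  refine ⟨fun a => ∀ l, D (Nat.pair a l) = true, ⟨fun a => ¬ D a = true, ?_, ?_⟩, ?_⟩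
  · refine ⟨fun _ => Classical.propDecidable _, ?_⟩
    refine Computable.of_eq hD.to_comp ?_
    intro n
    cases h : D n <;> simp [h]
  · intro a
    simp
  · intro m
    simp only [D, Nat.unpair_pair]
    constructor
    · rintro ⟨b, hb, hs⟩
      obtain ⟨c, hc⟩ := (hS b).1 hs
      refine ⟨Encodable.encode (b, c), fun l => ?_⟩
      simp only [G, Encodable.encodek]
      cases hl : (Encodable.decode (α := δ) l) with
      | none => simp [hb]
      | some d => simp [hb, hc d]
    · rintro ⟨k, hk⟩
      cases hd : (Encodable.decode (α := β × γ) k) with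
      | none => have := hk 0; simp only [G, hd] at this; exact absurd this (by simp)
      | some bc =>
        have hm : Encodable.encode bc.1 = m := by
          have := hk 0
          simp only [G, hd] at this
          cases hl : (Encodable.decode (α := δ) 0) with
          | none => simpa [hl] using this
          | some d => simp [hl] at this; exact this.1
        refine ⟨bc.1, hm, (hS _).2 ⟨bc.2, fun d => ?_⟩⟩
        have := hk (Encodable.encode d)
        simp only [G, hd, Encodable.encodek, Bool.and_eq_true, decide_eq_true_eq] at this
        exact this.2

theorem primrec_of_finite_support {α β : Type*} [Primcodable α] [Primcodable β] (b₀ : β)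
    (s : Set α) (hs : s.Finite) : ∀ g : α → β, (∀ a, a ∉ s → g a = b₀) → Primrec g := by
  classical
  induction s, hs using Set.Finite.induction_on with
  | empty => intro g hg; exact (Primrec.const b₀).of_eq fun a => (hg a (by simp)).symm
  | @insert a s ha hs ih =>
    intro g hg
    have h1 := ih (fun x => if x = a then b₀ else g x) (by
      intro x hx
      by_cases h : x = a
      · simp [h]
      · simp [h]; exact hg x (by simp [h, hx]))
    have h2 : Primrec fun x => if x = a then g a else (if x = a then b₀ else g x) :=
      Primrec.ite (Primrec.eq.comp Primrec.id (Primrec.const a)) (Primrec.const _) h1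
    refine h2.of_eq fun x => ?_
    by_cases h : x = a <;> simp [h]

/-- One step of the CA with local rule `g` on finite words. -/
def stepW (r : ℕ) (a₀ : A) (g : List A → A) (u : List A) : List A :=
  (List.range (u.length - 2 * r)).map fun i =>
    g ((List.range (2 * r + 1)).map fun k => u.getD (i + k) a₀)

theorem stepW_primrec [Primcodable A] (r : ℕ) (a₀ : A) (g : List A → A) (hg : Primrec g) :
    Primrec (stepW r a₀ g) := by
  unfold stepW
  refine Primrec.list_map (Primrec.list_range.comp
    (Primrec.nat_sub.comp Primrec.list_length (Primrec.const _))) ?_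
  refine hg.comp (Primrec.list_map (Primrec.const _) ?_)
  exact (Primrec.list_getD a₀).comp (Primrec.fst.comp Primrec.fst)
    (Primrec.nat_add.comp (Primrec.snd.comp Primrec.fst) Primrec.snd)

/-- The matrix of the `Σ⁰₂` formula. -/
def Mat (r : ℕ) (F : List A → List A) (b : List A × (List A × ℕ))
    (d : ℕ × (List A × List A)) : Prop :=
  b.2.2 ≤ d.1 → d.2.1.length = b.2.2 + r * d.1 → d.2.2.length = b.2.2 + r * d.1 →
    ∃ i < (F^[d.1] (d.2.1 ++ b.2.1 ++ d.2.2)).length + 1,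
      ((F^[d.1] (d.2.1 ++ b.2.1 ++ d.2.2)).drop i).take b.1.length = b.1

theorem imp_primrec {α : Type*} [Primcodable α] {p q : α → Prop} (hp : PrimrecPred p)
    (hq : PrimrecPred q) : PrimrecPred fun a => p a → q a := by
  classical
  exact (hp.not.or hq).of_eq fun a => by tauto

theorem Mat_primrec [Primcodable A] (r : ℕ) (F : List A → List A) (hF : Primrec F) :
    PrimrecRel (Mat r F) := by
  classical
  have hw : Primrec fun z : (List A × (List A × ℕ)) × (ℕ × (List A × List A)) => z.1.1 :=
    Primrec.fst.comp Primrec.fst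
  have hv : Primrec fun z : (List A × (List A × ℕ)) × (ℕ × (List A × List A)) => z.1.2.1 :=
    Primrec.fst.comp (Primrec.snd.comp Primrec.fst)
  have hN : Primrec fun z : (List A × (List A × ℕ)) × (ℕ × (List A × List A)) => z.1.2.2 :=
    Primrec.snd.comp (Primrec.snd.comp Primrec.fst)
  have ht : Primrec fun z : (List A × (List A × ℕ)) × (ℕ × (List A × List A)) => z.2.1 :=
    Primrec.fst.comp Primrec.snd
  have hp : Primrec fun z : (List A × (List A × ℕ)) × (ℕ × (List A × List A)) => z.2.2.1 :=
    Primrec.fst.comp (Primrec.snd.comp Primrec.snd)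
  have hs : Primrec fun z : (List A × (List A × ℕ)) × (ℕ × (List A × List A)) => z.2.2.2 :=
    Primrec.snd.comp (Primrec.snd.comp Primrec.snd)
  have hsum : Primrec fun z : (List A × (List A × ℕ)) × (ℕ × (List A × List A)) =>
      z.1.2.2 + r * z.2.1 :=
    Primrec.nat_add.comp hN (Primrec.nat_mul.comp (Primrec.const r) ht)
  have hU : Primrec fun z : (List A × (List A × ℕ)) × (ℕ × (List A × List A)) =>
      F^[z.2.1] (z.2.2.1 ++ z.1.2.1 ++ z.2.2.2) :=
    Primrec.nat_iterate ht
      (Primrec.list_append.comp (Primrec.list_append.comp hp hv) hs) (hF.comp Primrec.snd)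
  have hR : PrimrecRel fun (i : ℕ) (y : List A × List A) => (y.1.drop i).take y.2.length = y.2 := by
    refine Primrec.eq.comp (Primrec.list_take.comp ?_ (Primrec.list_drop.comp ?_ ?_)) ?_
    · exact Primrec.list_length.comp (Primrec.snd.comp Primrec.snd)
    · exact Primrec.fst
    · exact Primrec.fst.comp Primrec.snd
    · exact Primrec.snd.comp Primrec.snd
  have hex := (hR.exists_mem_list.comp (Primrec.list_range.comp
    (Primrec.succ.comp (Primrec.list_length.comp hU))) (Primrec.pair hU hw)).of_eq
    (q := fun z => ∃ i < (F^[z.2.1] (z.2.2.1 ++ z.1.2.1 ++ z.2.2.2)).length + 1,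
      ((F^[z.2.1] (z.2.2.1 ++ z.1.2.1 ++ z.2.2.2)).drop i).take z.1.1.length = z.1.1)
    (fun z => by simp only [List.mem_range, Nat.succ_eq_add_one])
  refine imp_primrec (Primrec.nat_le.comp hN ht) (imp_primrec ?_ (imp_primrec ?_ hex))
  · exact Primrec.eq.comp (Primrec.list_length.comp hp) hsum
  · exact Primrec.eq.comp (Primrec.list_length.comp hs) hsum

/-! ### Words -/

theorem word_def (x : ℤ → A) (i : ℤ) (n : ℕ) :
    word x i n = (List.range n).map fun k : ℕ => x (i + k) := by
  have : ∀ l : List ℕ, List.map (fun k : ℤ => x (i + k)) (do let a ← l; pure (a : ℤ)) =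
      l.map fun k : ℕ => x (i + k) := by
    intro l
    induction l with
    | nil => rfl
    | cons a l ih => simpa using ih
  exact this _

theorem word_length (x : ℤ → A) (i : ℤ) (n : ℕ) : (word x i n).length = n := by simp [word_def]

theorem word_getD (x : ℤ → A) (i : ℤ) (n k : ℕ) (a₀ : A) (h : k < n) :
    (word x i n).getD k a₀ = x (i + k) := by
  simp [word_def, List.getD, h]

theorem word_eq_iff (x y : ℤ → A) (i j : ℤ) (n : ℕ) :
    word x i n = word y j n ↔ ∀ k : ℕ, k < n → x (i + k) = y (j + k) := by
  simp [word_def]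

theorem word_add (x : ℤ → A) (i : ℤ) (m n : ℕ) :
    word x i (m + n) = word x i m ++ word x (i + m) n := by
  simp [word_def, List.range_add, add_assoc, Function.comp_def]

theorem word_drop_take (x : ℤ → A) (i : ℤ) (n j m : ℕ) (h : j + m ≤ n) :
    ((word x i n).drop j).take m = word x (i + j) m := by
  obtain ⟨c, rfl⟩ := Nat.exists_eq_add_of_le h
  rw [word_add, word_add, List.append_assoc]
  rw [List.drop_left' (word_length _ _ _), List.take_left' (word_length _ _ _)]

/-- A configuration carrying the word `l` at position `j`. -/
def cfg (a₀ : A) (j : ℤ) (l : List A) : ℤ → A := fun i => l.getD (i - j).toNat a₀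

theorem word_cfg (a₀ : A) (j : ℤ) (l : List A) : word (cfg a₀ j l) j l.length = l := by
  apply List.ext_getElem
  · simp [word_def]
  · intro k h1 h2
    simp [word_def, cfg, h2]

theorem stepW_word (r : ℕ) (a₀ : A) (g : List A → A) (f : (ℤ → A) → (ℤ → A))
    (hfg : ∀ x i, f x i = g (word x (i - r) (2 * r + 1))) (x : ℤ → A) (i : ℤ) (n : ℕ) :
    stepW r a₀ g (word x i (n + 2 * r)) = word (f x) (i + r) n := by
  unfold stepW
  rw [word_length, Nat.add_sub_cancel]
  conv_rhs => rw [word_def]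
  apply List.map_congr_left
  intro k hk
  rw [List.mem_range] at hk
  rw [hfg]
  congr 1
  conv_rhs => rw [word_def]
  apply List.map_congr_left
  intro l hl
  rw [List.mem_range] at hl
  rw [word_getD _ _ _ _ _ (by omega)]
  congr 1
  push_cast
  ring

theorem stepW_iter (r : ℕ) (a₀ : A) (g : List A → A) (f : (ℤ → A) → (ℤ → A))
    (hfg : ∀ x i, f x i = g (word x (i - r) (2 * r + 1))) (t : ℕ) : ∀ (x : ℤ → A) (i : ℤ) (n : ℕ),
    (stepW r a₀ g)^[t] (word x i (n + 2 * (r * t))) = word (f^[t] x) (i + r * t) n := by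
  induction t with
  | zero => intro x i n; simp
  | succ t ih =>
    intro x i n
    have h : n + 2 * (r * (t + 1)) = (n + 2 * (r * t)) + 2 * r := by ring
    rw [iterate_succ_apply, iterate_succ_apply, h, stepW_word r a₀ g f hfg, ih]
    congr 1
    push_cast
    ring

theorem Mat_iff (r : ℕ) (a₀ : A) (g : List A → A) (f : (ℤ → A) → (ℤ → A))
    (hfg : ∀ x i, f x i = g (word x (i - r) (2 * r + 1))) (w v : List A) (N : ℕ) :
    (∀ d, Mat r (stepW r a₀ g) (w, (v, N)) d) ↔
      ∀ t ≥ N, ∀ x : ℤ → A, word x 0 v.length = v →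
        ∃ i : ℤ, -N ≤ i ∧ i + w.length ≤ v.length + N ∧ word (f^[t] x) i w.length = w := by
  have key : ∀ (t : ℕ) (x : ℤ → A),
      (stepW r a₀ g)^[t] (word x (-(N + r * t : ℕ)) ((N + r * t) + v.length + (N + r * t)))
        = word (f^[t] x) (-N) (2 * N + v.length) := by
    intro t x
    have h : (N + r * t) + v.length + (N + r * t) = (2 * N + v.length) + 2 * (r * t) := by ring
    rw [h, stepW_iter r a₀ g f hfg]
    congr 1
    push_cast
    ring
  constructor
  · intro h t ht x hx
    obtain ⟨i, hi, hw⟩ := h (t, (word x (-(N + r * t : ℕ)) (N + r * t),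
      word x v.length (N + r * t))) ht (word_length _ _ _) (word_length _ _ _)
    have e : word x (-(N + r * t : ℕ)) (N + r * t) ++ v ++ word x v.length (N + r * t)
        = word x (-(N + r * t : ℕ)) ((N + r * t) + v.length + (N + r * t)) := by
      rw [word_add x _ (N + r * t + v.length), word_add x _ (N + r * t) v.length,
        neg_add_cancel, hx]
      congr 2
      push_cast; ring
    simp only [e, key, word_length] at hi hw
    have hl : i + w.length ≤ 2 * N + v.length := by
      have := congrArg List.length hw
      simp [word_length] at this
      omega
    rw [word_drop_take _ _ _ _ _ hl] at hw
    exact ⟨-N + i, by omega, by omega, hw⟩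
  · rintro h ⟨t, p, s⟩ ht hp hs
    simp only at ht hp hs ⊢
    set x := cfg a₀ (-(N + r * t : ℕ)) (p ++ v ++ s) with hx
    have e : word x (-(N + r * t : ℕ)) ((N + r * t) + v.length + (N + r * t)) = p ++ v ++ s := by
      rw [← word_cfg a₀ (-(N + r * t : ℕ)) (p ++ v ++ s)]
      congr 1
      simp [hp, hs, add_assoc]
    have hv : word x 0 v.length = v := by
      have e' := e
      rw [word_add x _ (N + r * t + v.length), word_add x _ (N + r * t) v.length] at e'
      have := List.append_inj_left' e' (by rw [word_length, hs])
      have := List.append_inj_right this (by rw [word_length, hp])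
      rwa [neg_add_cancel] at this
    obtain ⟨i, h1, h2, h3⟩ := h t ht x hv
    obtain ⟨j, rfl⟩ : ∃ j : ℕ, i = -N + j := ⟨(i + N).toNat, by omega⟩
    refine ⟨j, ?_, ?_⟩
    · simp only [← e, key, word_length]; omega
    · simp only [← e, key]
      rw [word_drop_take _ _ _ _ _ (by omega), h3]

/-! ### Topology part -/

/-- `x` and `y` agree on `[-M, M]`. -/
def agree (M : ℕ) (x y : ℤ → A) : Prop := ∀ i : ℤ, -M ≤ i → i ≤ M → x i = y i

theorem exists_agree [TopologicalSpace A] [DiscreteTopology A] {U : Set (ℤ → A)} (hU : IsOpen U)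
    {x : ℤ → A} (hx : x ∈ U) : ∃ M : ℕ, ∀ y, agree M x y → y ∈ U := by
  obtain ⟨I, u, h1, h2⟩ := isOpen_pi_iff.1 hU x hx
  refine ⟨I.sup Int.natAbs, fun y hy => h2 fun i hi => ?_⟩
  have : i.natAbs ≤ I.sup Int.natAbs := Finset.le_sup (f := Int.natAbs) hi
  rw [← hy i (by omega) (by omega)]
  exact (h1 i hi).2

theorem isOpen_of_agree [TopologicalSpace A] [DiscreteTopology A] {U : Set (ℤ → A)} (M : ℕ)
    (h : ∀ x ∈ U, ∀ y, agree M x y → y ∈ U) : IsOpen U := by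
  rw [isOpen_pi_iff]
  intro x hx
  refine ⟨Finset.Icc (-M : ℤ) M, fun i => {x i}, fun i _ => ⟨isOpen_discrete _, rfl⟩, ?_⟩
  intro y hy
  refine h x hx y fun i h1 h2 => ?_
  exact (hy i (by simp [h1, h2])).symm

theorem agree_mono {M M' : ℕ} (h : M ≤ M') {x y : ℤ → A} (hxy : agree M' x y) : agree M x y :=
  fun i h1 h2 => hxy i (by omega) (by omega)

theorem agree_symm {M : ℕ} {x y : ℤ → A} (hxy : agree M x y) : agree M y x :=
  fun i h1 h2 => (hxy i h1 h2).symm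

theorem agree_trans {M : ℕ} {x y z : ℤ → A} (hxy : agree M x y) (h : agree M y z) : agree M x z :=
  fun i h1 h2 => (hxy i h1 h2).trans (h i h1 h2)

/-- translation -/
def tr (j : ℤ) (x : ℤ → A) : ℤ → A := fun i => x (i + j)

theorem tr_comm [TopologicalSpace A] {f : (ℤ → A) → (ℤ → A)} (hf : IsCA f) (j : ℤ) (x : ℤ → A) :
    f (tr j x) = tr j (f x) := by
  have hs : ∀ x, f (tr 1 x) = tr 1 (f x) := fun x => congrFun hf.2 x
  have hadd : ∀ (a b : ℤ) (x : ℤ → A), tr a (tr b x) = tr (a + b) x := by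
    intro a b x; funext i; simp [tr, add_assoc]
  have h0 : ∀ x : ℤ → A, tr 0 x = x := by intro x; funext i; simp [tr]
  have hs' : ∀ x, f (tr (-1) x) = tr (-1) (f x) := by
    intro x
    have := hs (tr (-1) x)
    rw [hadd, add_neg_cancel, h0] at this
    rw [this, hadd, neg_add_cancel, h0]
  induction j using Int.induction_on generalizing x with
  | zero => rw [h0, h0]
  | succ i ih => rw [← hadd, ← hadd, ih, hs]
  | pred i ih => rw [sub_eq_add_neg, ← hadd, ← hadd, ih, hs']

theorem exists_rule [Fintype A] [Nonempty A] [Primcodable A] [TopologicalSpace A]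
    [DiscreteTopology A] (f : (ℤ → A) → (ℤ → A)) (hf : IsCA f) :
    ∃ (r : ℕ) (g : List A → A), Primrec g ∧ ∀ x i, f x i = g (word x (i - r) (2 * r + 1)) := by
  classical
  obtain ⟨a₀⟩ := ‹Nonempty A›
  let V : ℕ → Set (ℤ → A) := fun M => {x | ∀ y, agree M x y → f y 0 = f x 0}
  have hVo : ∀ M, IsOpen (V M) := by
    intro M
    refine isOpen_of_agree M fun x hx y hy z hz => ?_
    rw [hx z (agree_trans hy hz), hx y hy]
  have hVc : univ ⊆ ⋃ M, V M := by
    intro x _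
    have ho : IsOpen {y | f y 0 = f x 0} :=
      (isOpen_discrete {f x 0}).preimage ((continuous_apply 0).comp hf.1)
    obtain ⟨M, hM⟩ := exists_agree ho (x := x) rfl
    exact mem_iUnion.2 ⟨M, hM⟩
  have hVm : Monotone V := fun M M' h x hx y hy => hx y (agree_mono h hy)
  obtain ⟨r, hr⟩ := isCompact_univ.elim_directed_cover V hVo hVc hVm.directed_le
  refine ⟨r, fun l => if l.length = 2 * r + 1 then f (cfg a₀ (-r) l) 0 else a₀, ?_, ?_⟩
  · refine primrec_of_finite_support a₀ _ (List.finite_length_eq A (2 * r + 1)) _ ?_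
    intro l hl
    simp only [mem_ofPred_eq] at hl
    simp [hl]
  · intro x i
    simp only [word_length, if_true]
    have h1 : f x i = f (tr i x) 0 := by rw [tr_comm hf]; simp [tr]
    rw [h1]
    refine (hr (mem_univ (tr i x)) _ fun k hk1 hk2 => ?_).symm
    obtain ⟨m, rfl⟩ : ∃ m : ℕ, k = -r + m := ⟨(k + r).toNat, by omega⟩
    have : (-(r : ℤ) + m - -r).toNat = m := by omega
    simp only [cfg, this]
    rw [word_getD _ _ _ _ _ (by omega)]
    simp only [tr]
    congr 1
    ring

section

set_option linter.unusedSectionVars false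

variable [Fintype A] [Nonempty A] [TopologicalSpace A] [DiscreteTopology A]

theorem realm_gen_residual (f : (ℤ → A) → (ℤ → A)) :
    realm f (genLimitSet f) ∈ residual (ℤ → A) := by
  let S : Set (Set (ℤ → A)) := {C | IsClosed C ∧ realm f C ∈ residual (ℤ → A)}
  obtain ⟨T, hTc, hTS, hT⟩ := TopologicalSpace.isOpen_sUnion_countable (compl '' S) (by
    rintro _ ⟨C, hC, rfl⟩; exact hC.1.isOpen_compl)
  have h : ⋂ t ∈ T, realm f tᶜ ∈ residual (ℤ → A) := by
    rw [countable_bInter_mem hTc]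
    intro t ht
    obtain ⟨C, hC, rfl⟩ := hTS ht
    rw [compl_compl]; exact hC.2
  filter_upwards [h] with x hx y hy
  by_contra hn
  have : y ∈ ⋃₀ (compl '' S) := by
    rw [sUnion_image, ← compl_iInter₂]
    intro h'
    apply hn
    rw [genLimitSet, sInter_eq_biInter]; exact h'
  rw [← hT] at this
  obtain ⟨t, ht, hyt⟩ := this
  simp only [mem_iInter] at hx
  exact hx t ht hy hyt

theorem gen_closed (f : (ℤ → A) → (ℤ → A)) : IsClosed (genLimitSet f) :=
  isClosed_sInter fun _ h => h.1

/-- translation as a homeomorphism -/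
def trHomeo (j : ℤ) : (ℤ → A) ≃ₜ (ℤ → A) where
  toFun := tr j
  invFun := tr (-j)
  left_inv x := by funext i; simp [tr]
  right_inv x := by funext i; simp [tr]
  continuous_toFun := continuous_pi fun i => continuous_apply (i + j)
  continuous_invFun := continuous_pi fun i => continuous_apply (i + -j)

theorem tr_iter {f : (ℤ → A) → (ℤ → A)} (hf : IsCA f) (j : ℤ) (t : ℕ) (x : ℤ → A) :
    f^[t] (tr j x) = tr j (f^[t] x) :=
  ((show Function.Commute f (tr j) from fun x => tr_comm hf j x).iterate_left t) x

theorem tr_gen {f : (ℤ → A) → (ℤ → A)} (hf : IsCA f) (j : ℤ) {x : ℤ → A}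
    (hx : x ∈ genLimitSet f) : tr j x ∈ genLimitSet f := by
  rintro C ⟨hC, hr⟩
  refine hx (tr j ⁻¹' C) ⟨hC.preimage (trHomeo j).continuous, ?_⟩
  have h1 : trHomeo j ⁻¹' (realm f C) ∈ residual (ℤ → A) := by
    rw [← (trHomeo (A := A) j).residual_map_eq] at hr
    exact hr
  filter_upwards [h1] with z hz y hy
  refine hz ?_
  have := MapClusterPt.continuousAt_comp (f := tr j) (trHomeo (A := A) j).continuous.continuousAt hy
  have e : (fun t => f^[t] (tr j z)) = tr j ∘ fun t => f^[t] z :=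
    funext fun t => tr_iter hf j t z
  change MapClusterPt _ _ (fun t => f^[t] (tr j z))
  rw [e]
  exact this

theorem omega_nonempty (f : (ℤ → A) → (ℤ → A)) (x : ℤ → A) : (omegaSet f x).Nonempty :=
  exists_clusterPt_of_compactSpace _

theorem word_tr (j : ℤ) (x : ℤ → A) (i : ℤ) (n : ℕ) : word (tr j x) i n = word x (i + j) n := by
  rw [word_eq_iff]
  intro k hk
  simp only [tr]; congr 1; ring

theorem agree_word {M : ℕ} {x y : ℤ → A} (h : agree M x y) {i : ℤ} {n : ℕ} (h1 : -M ≤ i)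
    (h2 : i + n ≤ M) : word x i n = word y i n := by
  rw [word_eq_iff]
  intro k hk
  exact h _ (by omega) (by omega)

/-- configurations containing `w` inside `[-M, M]`. -/
def occ (w : List A) (M : ℕ) : Set (ℤ → A) :=
  {x | ∃ i : ℤ, -M ≤ i ∧ i + w.length ≤ M ∧ word x i w.length = w}

theorem occ_agree (w : List A) (M : ℕ) {x y : ℤ → A} (h : agree M x y) (hx : x ∈ occ w M) :
    y ∈ occ w M := by
  obtain ⟨i, h1, h2, h3⟩ := hx
  exact ⟨i, h1, h2, by rw [← agree_word h h1 h2, h3]⟩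

theorem occ_open (w : List A) (M : ℕ) : IsOpen (occ w M) :=
  isOpen_of_agree M fun _ hx _ h => occ_agree w M h hx

theorem occ_closed (w : List A) (M : ℕ) : IsClosed (occ w M) :=
  isOpen_compl_iff.1 (isOpen_of_agree M fun _ hx _ h hy => hx (occ_agree w M (agree_symm h) hy))

theorem occ_mono (w : List A) : Monotone (occ w) := by
  rintro M M' h x ⟨i, h1, h2, h3⟩
  exact ⟨i, by omega, by omega, h3⟩

theorem bounded_gap {f : (ℤ → A) → (ℤ → A)} (hf : IsCA f)
    (hmin : ∀ Y ⊆ genLimitSet f, IsClosed Y → shift '' Y = Y → Y.Nonempty →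
      Y = genLimitSet f) (w : List A) (hw : w ∈ lang (genLimitSet f)) :
    ∃ M, genLimitSet f ⊆ occ w M := by
  let Y : Set (ℤ → A) := genLimitSet f ∩ (⋃ M, occ w M)ᶜ
  have hocc : ∀ x : ℤ → A, (x ∈ ⋃ M, occ w M) ↔ ∃ i : ℤ, word x i w.length = w := by
    intro x
    rw [mem_iUnion]
    constructor
    · rintro ⟨M, i, -, -, h⟩; exact ⟨i, h⟩
    · rintro ⟨i, h⟩
      exact ⟨i.natAbs + w.length, i, by omega, by omega, h⟩
  have htr : ∀ j x, x ∈ Y → tr j x ∈ Y := by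
    rintro j x ⟨h1, h2⟩
    refine ⟨tr_gen hf j h1, fun h => h2 ?_⟩
    rw [hocc] at h ⊢
    obtain ⟨i, hi⟩ := h
    exact ⟨i + j, by rw [← word_tr, hi]⟩
  have hYe : ¬ Y.Nonempty := by
    intro hne
    have hYeq := hmin Y inter_subset_left
      ((gen_closed f).inter (isOpen_iUnion (occ_open w)).isClosed_compl) (by
        apply Subset.antisymm
        · rintro _ ⟨x, hx, rfl⟩; exact htr 1 x hx
        · intro x hx
          refine ⟨tr (-1) x, htr _ _ hx, ?_⟩
          funext i; simp [tr, shift]) hne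
    obtain ⟨x, hx, i, hi⟩ := hw
    rw [← hYeq] at hx
    exact hx.2 ((hocc x).2 ⟨i, hi⟩)
  refine (gen_closed f).isCompact.elim_directed_cover (occ w) (occ_open w) ?_
    (occ_mono w).directed_le
  intro x hx
  by_contra h
  exact hYe ⟨x, hx, h⟩

theorem main_iff {f : (ℤ → A) → (ℤ → A)} (hf : IsCA f)
    (hmin : ∀ Y ⊆ genLimitSet f, IsClosed Y → shift '' Y = Y → Y.Nonempty →
      Y = genLimitSet f) (w : List A) :
    w ∈ lang (genLimitSet f) ↔ ∃ (v : List A) (N : ℕ),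
      ∀ t ≥ N, ∀ x : ℤ → A, word x 0 v.length = v →
        ∃ i : ℤ, -N ≤ i ∧ i + w.length ≤ v.length + N ∧ word (f^[t] x) i w.length = w := by
  constructor
  · intro hw
    obtain ⟨M, hM⟩ := bounded_gap hf hmin w hw
    let F : ℕ → Set (ℤ → A) := fun T => ⋂ t ≥ T, f^[t] ⁻¹' (occ w M)
    have hFc : ∀ T, IsClosed (F T) := fun T => isClosed_biInter fun t _ =>
      (occ_closed w M).preimage (hf.1.iterate t)
    have hcov : realm f (genLimitSet f) ⊆ ⋃ T, F T := by
      intro x hx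
      by_contra hn
      have hfr : ∃ᶠ t in atTop, f^[t] x ∈ (occ w M)ᶜ := by
        rw [frequently_atTop]
        intro T
        by_contra hT
        apply hn
        push Not at hT
        refine mem_iUnion.2 ⟨T, mem_iInter₂.2 fun t ht => ?_⟩
        by_contra h
        exact hT t ht h
      obtain ⟨y, hy, hcl⟩ := (occ_open w M).isClosed_compl.isCompact.exists_mapClusterPt_of_frequently hfr
      exact hy (hM (hx hcl))
    obtain ⟨G, hGs, hG, hGd⟩ := mem_residual.1 (realm_gen_residual f)
    have hd := hG.dense_iUnion_interior_of_closed hGd hFc (hGs.trans hcov)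
    obtain ⟨x, hx⟩ := hd.nonempty
    obtain ⟨T, hx⟩ := mem_iUnion.1 hx
    obtain ⟨K, hK⟩ := exists_agree isOpen_interior hx
    refine ⟨word x (-K) (2 * K + 1), T + M + K, fun t ht z hz => ?_⟩
    rw [word_length] at hz ⊢
    have hag : agree K x (tr K z) := by
      intro i h1 h2
      rw [word_eq_iff] at hz
      have := hz (i + K).toNat (by omega)
      rw [Int.toNat_of_nonneg (by omega)] at this
      simp only [tr]
      rw [zero_add, neg_add_cancel_comm_assoc] at this
      exact this.symm
    have hin := interior_subset (hK _ hag)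
    obtain ⟨i, h1, h2, h3⟩ := mem_iInter₂.1 hin t (by omega)
    rw [tr_iter hf, word_tr] at h3
    exact ⟨i + K, by push_cast; omega, by push_cast; omega, h3⟩
  · rintro ⟨v, N, h⟩
    obtain ⟨a₀⟩ := ‹Nonempty A›
    have ho : IsOpen {x : ℤ → A | word x 0 v.length = v} :=
      isOpen_of_agree v.length fun x hx y hy => by
        rw [mem_ofPred_eq, ← agree_word hy (by omega) (by omega)]; exact hx
    obtain ⟨x, hx1, hx2⟩ := (dense_of_mem_residual (realm_gen_residual f)).inter_open_nonempty _ ho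
      ⟨cfg a₀ 0 v, word_cfg a₀ 0 v⟩
    obtain ⟨y, hy⟩ := omega_nonempty f x
    have hno : IsOpen {z | agree (v.length + N) y z} :=
      isOpen_of_agree (v.length + N) fun z hz z' hz' => agree_trans hz hz'
    have hfr := (mapClusterPt_iff_frequently.1 hy) _ (hno.mem_nhds (fun _ _ _ => rfl))
    obtain ⟨t, ht, hag⟩ := (frequently_atTop.1 hfr) N
    obtain ⟨i, h1, h2, h3⟩ := h t ht x hx1
    refine ⟨y, hx2 hy, i, ?_⟩
    rw [agree_word hag (by push_cast; omega) (by push_cast; omega), h3]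

end

/-- if the generic limit set of a CA is a minimal subshift (it has no
nonempty proper closed shift-invariant subset), then its language is `Σ⁰₂`. -/
theorem stmt6 [Fintype A] [Nonempty A] [Primcodable A] [TopologicalSpace A]
    [DiscreteTopology A] (f : (ℤ → A) → (ℤ → A)) (hf : IsCA f)
    (hmin : ∀ Y ⊆ genLimitSet f, IsClosed Y → shift '' Y = Y → Y.Nonempty →
      Y = genLimitSet f) :
    SigmaLang 2 (lang (genLimitSet f)) := by
  classical
  obtain ⟨r, g, hg, hfg⟩ := exists_rule f hf
  have a₀ : A := Classical.arbitrary A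
  refine natSigma_two_of_primrec (Mat r (stepW r a₀ g)) (Mat_primrec r _ (stepW_primrec r a₀ g hg))
    (fun w => w ∈ lang (genLimitSet f)) fun w => ?_
  rw [main_iff hf hmin w, Prod.exists]
  simp only [Mat_iff r a₀ g f hfg]

end Gls
end

section
/- Let X ⊆ A^ℤ be a subshift and let g : X → X be a continuous map commuting with the shift σ on X (a cellular automaton on X). If g is equicontinuous (the family {g^t : t ∈ ℕ} is equicontinuous on X), then g is eventually periodic: there exist k ≥ 0 and p ≥ 1 such that g^{k+p} = g^k on X. -/
open Filter Set Function

namespace Gls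

variable {A : Type*}

/-- The restriction of the shift map to a shift-invariant set `X`. -/
def shiftRes {A : Type*} (X : Set (ℤ → A)) (h : shift '' X = X) : X → X :=
  fun x => ⟨shift x.val, h.subset (Set.mem_image_of_mem shift x.prop)⟩

/-- an equicontinuous cellular automaton `g` on a subshift `X` (a continuous
self-map of `X` commuting with the restricted shift, whose family of iterates is
equicontinuous) is eventually periodic: `g^{k+p} = g^k` for some `k ≥ 0`, `p ≥ 1`. -/
theorem stmt9 [Fintype A] [UniformSpace A] [DiscreteTopology A]
    (X : Set (ℤ → A)) (hXc : IsClosed X) (hXs : shift '' X = X)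
    (g : X → X) (hg : Continuous g)
    (hcomm : g ∘ shiftRes X hXs = shiftRes X hXs ∘ g)
    (hequi : Equicontinuous fun t : ℕ => g^[t]) :
    ∃ (k p : ℕ), 1 ≤ p ∧ g^[k + p] = g^[k] := by
  classical
  have : CompactSpace X := isCompact_iff_compactSpace.mp hXc.isCompact
  have hA : {p : A × A | p.1 = p.2} ∈ uniformity A := by
    have h1 : ∀ a : A, {b : A | a = b} ∈ nhds a := fun a => by
      rw [nhds_discrete]; simp
    have h2 : ∀ a : A, ∃ V ∈ uniformity A, ∀ b, (a, b) ∈ V → a = b := fun a => by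
      obtain ⟨V, hV, h⟩ := UniformSpace.mem_nhds_iff.mp (h1 a)
      exact ⟨V, hV, fun b hb => h hb⟩
    choose V hV h using h2
    refine Filter.mem_of_superset (Filter.iInter_mem.mpr hV) ?_
    rintro ⟨a, b⟩ hab
    exact h a b (Set.mem_iInter.mp hab a)
  have hE : {p : X × X | p.1.1 0 = p.2.1 0} ∈ uniformity X := by
    have hu : UniformContinuous fun x : X => x.1 0 :=
      (Pi.uniformContinuous_proj (fun _ : ℤ => A) 0).comp uniformContinuous_subtype_val
    exact hu hA
  have hloc : IsLocallyConstant (fun (x : X) (t : ℕ) => (g^[t] x).1 0) := by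
    rw [IsLocallyConstant.iff_eventually_eq]
    intro x
    filter_upwards [hequi x _ hE] with y hy
    funext t
    exact (hy t).symm
  have hfin := hloc.range_finite
  have : Finite (Set.range (fun (x : X) (t : ℕ) => (g^[t] x).1 0)) := hfin
  obtain ⟨s, t, hne, hst⟩ := Finite.exists_ne_map_eq_of_infinite
    (fun (t : ℕ) (r : Set.range (fun (x : X) (t : ℕ) => (g^[t] x).1 0)) => r.1 t)
  have h0 : ∀ x : X, (g^[s] x).1 0 = (g^[t] x).1 0 := fun x =>
    congrFun hst ⟨_, x, rfl⟩
  have hc : ∀ (n : ℕ) (x : X) (i : ℤ),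
      (g^[n] (shiftRes X hXs x)).1 i = (g^[n] x).1 (i + 1) := by
    intro n x i
    have hc' : Function.Commute g (shiftRes X hXs) := fun x => congrFun hcomm x
    rw [(hc'.iterate_left n).eq x]
    rfl
  have hall : ∀ (i : ℤ) (x : X), (g^[s] x).1 i = (g^[t] x).1 i := by
    intro i
    induction i using Int.induction_on with
    | zero => exact h0
    | succ i ih =>
      intro x
      rw [← hc, ← hc]
      exact ih _
    | pred i ih =>
      intro x
      obtain ⟨y, hy, hyx⟩ := hXs.symm.subset x.2
      have hx : x = shiftRes X hXs ⟨y, hy⟩ := Subtype.ext hyx.symm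
      rw [hx, hc, hc]
      simpa using ih ⟨y, hy⟩
  have heq : g^[s] = g^[t] := by
    funext x
    apply Subtype.ext
    funext i
    exact hall i x
  rcases lt_or_gt_of_ne hne with h | h
  · exact ⟨s, t - s, by omega, by rw [Nat.add_sub_cancel' h.le, heq]⟩
  · exact ⟨t, s - t, by omega, by rw [Nat.add_sub_cancel' h.le, heq]⟩

end Gls
end
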